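/- Suppose there exist a symmetric positive definite n×n matrix Y and constants α, β_ω, β_v, β_e, β_r ≥ 0 such that −𝓜̃ − α 𝓝̃ − β_ω S_ω − β_v S_v − β_e S_e − β_r S_r is positive semidefinite, where 𝓜̃ is the symmetric block matrix with (1,1) block Y Aᵀ + A Y, (2,1) block Gᵀ, (3,1) block B_vᵀ, (4,1) block B_eᵀ, (5,1) block B_rᵀ, all other blocks zero; 𝓝̃ = diag(Y, 0, 0, 0, 0, −1); S_ω = diag(0, −W_ω, 0, 0, 0, 1); S_v = diag(0, 0, −W_v, 0, 0, 1); S_e = diag(0, 0, 0, −P̄_e, 0, 1); S_r = diag(0, 0, 0, 0, −Π, 1). Then, with P = Y⁻¹, every differentiable trajectory ζ of the closed-loop system under admissible disturbances satisfies ζ(t)ᵀ P ζ(t) ≤ max{ζ(0)ᵀ P ζ(0), 1} for all t ≥ 0; in particular every trajectory is bounded. -/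

import Mathlib

open Matrix MeasureTheory Filter

/-- Index type for the stacked vector κ = (ζ, ω, v, ē, r, 1). -/
abbrev Idx (n p q m s : ℕ) := Fin n ⊕ Fin p ⊕ Fin q ⊕ Fin m ⊕ Fin s ⊕ Fin 1

noncomputable section

variable {n p q m s : ℕ}

/-- The stacked vector κ = (ζ, ω, v, ē, r, 1). -/
def stack (z : Fin n → ℝ) (w : Fin p → ℝ) (v : Fin q → ℝ) (e : Fin m → ℝ)
    (r : Fin s → ℝ) : Idx n p q m s → ℝ :=
  Sum.elim z (Sum.elim w (Sum.elim v (Sum.elim e (Sum.elim r (fun _ => 1)))))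

/-- The symmetric block matrix 𝓜 with (1,1) block Aᵀ P + P A and
(2,1),(3,1),(4,1),(5,1) blocks GᵀP, Bvᵀ P, Beᵀ P, Brᵀ P, all other blocks zero. -/
def bigM (P A : Matrix (Fin n) (Fin n) ℝ) (G : Matrix (Fin n) (Fin p) ℝ)
    (Bv : Matrix (Fin n) (Fin q) ℝ) (Be : Matrix (Fin n) (Fin m) ℝ)
    (Br : Matrix (Fin n) (Fin s) ℝ) : Matrix (Idx n p q m s) (Idx n p q m s) ℝ :=
  Matrix.of fun i j => match i, j with
  | Sum.inl i, Sum.inl j => (Aᵀ * P + P * A) i j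
  | Sum.inl i, Sum.inr (Sum.inl j) => (P * G) i j
  | Sum.inr (Sum.inl i), Sum.inl j => (Gᵀ * P) i j
  | Sum.inl i, Sum.inr (Sum.inr (Sum.inl j)) => (P * Bv) i j
  | Sum.inr (Sum.inr (Sum.inl i)), Sum.inl j => (Bvᵀ * P) i j
  | Sum.inl i, Sum.inr (Sum.inr (Sum.inr (Sum.inl j))) => (P * Be) i j
  | Sum.inr (Sum.inr (Sum.inr (Sum.inl i))), Sum.inl j => (Beᵀ * P) i j
  | Sum.inl i, Sum.inr (Sum.inr (Sum.inr (Sum.inr (Sum.inl j)))) => (P * Br) i j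
  | Sum.inr (Sum.inr (Sum.inr (Sum.inr (Sum.inl i)))), Sum.inl j => (Brᵀ * P) i j
  | _, _ => 0

/-- The congruence-transformed block matrix 𝓜̃ with (1,1) block Y Aᵀ + A Y and
(2,1),(3,1),(4,1),(5,1) blocks Gᵀ, Bvᵀ, Beᵀ, Brᵀ, all other blocks zero. -/
def bigMt (Y A : Matrix (Fin n) (Fin n) ℝ) (G : Matrix (Fin n) (Fin p) ℝ)
    (Bv : Matrix (Fin n) (Fin q) ℝ) (Be : Matrix (Fin n) (Fin m) ℝ)
    (Br : Matrix (Fin n) (Fin s) ℝ) : Matrix (Idx n p q m s) (Idx n p q m s) ℝ :=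
  Matrix.of fun i j => match i, j with
  | Sum.inl i, Sum.inl j => (Y * Aᵀ + A * Y) i j
  | Sum.inl i, Sum.inr (Sum.inl j) => G i j
  | Sum.inr (Sum.inl i), Sum.inl j => Gᵀ i j
  | Sum.inl i, Sum.inr (Sum.inr (Sum.inl j)) => Bv i j
  | Sum.inr (Sum.inr (Sum.inl i)), Sum.inl j => Bvᵀ i j
  | Sum.inl i, Sum.inr (Sum.inr (Sum.inr (Sum.inl j))) => Be i j
  | Sum.inr (Sum.inr (Sum.inr (Sum.inl i))), Sum.inl j => Beᵀ i j
  | Sum.inl i, Sum.inr (Sum.inr (Sum.inr (Sum.inr (Sum.inl j)))) => Br i j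
  | Sum.inr (Sum.inr (Sum.inr (Sum.inr (Sum.inl i)))), Sum.inl j => Brᵀ i j
  | _, _ => 0

/-- 𝓝 = diag(P, 0, 0, 0, 0, −1). -/
def bigN (P : Matrix (Fin n) (Fin n) ℝ) : Matrix (Idx n p q m s) (Idx n p q m s) ℝ :=
  Matrix.of fun i j => match i, j with
  | Sum.inl i, Sum.inl j => P i j
  | Sum.inr (Sum.inr (Sum.inr (Sum.inr (Sum.inr _)))),
    Sum.inr (Sum.inr (Sum.inr (Sum.inr (Sum.inr _)))) => -1
  | _, _ => 0

/-- S_ω = diag(0, −W_ω, 0, 0, 0, 1). -/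
def Sw (W : Matrix (Fin p) (Fin p) ℝ) : Matrix (Idx n p q m s) (Idx n p q m s) ℝ :=
  Matrix.of fun i j => match i, j with
  | Sum.inr (Sum.inl i), Sum.inr (Sum.inl j) => -W i j
  | Sum.inr (Sum.inr (Sum.inr (Sum.inr (Sum.inr _)))),
    Sum.inr (Sum.inr (Sum.inr (Sum.inr (Sum.inr _)))) => 1
  | _, _ => 0

/-- S_v = diag(0, 0, −W_v, 0, 0, 1). -/
def Sv (W : Matrix (Fin q) (Fin q) ℝ) : Matrix (Idx n p q m s) (Idx n p q m s) ℝ :=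
  Matrix.of fun i j => match i, j with
  | Sum.inr (Sum.inr (Sum.inl i)), Sum.inr (Sum.inr (Sum.inl j)) => -W i j
  | Sum.inr (Sum.inr (Sum.inr (Sum.inr (Sum.inr _)))),
    Sum.inr (Sum.inr (Sum.inr (Sum.inr (Sum.inr _)))) => 1
  | _, _ => 0

/-- S_e = diag(0, 0, 0, −P̄_e, 0, 1). -/
def Se (W : Matrix (Fin m) (Fin m) ℝ) : Matrix (Idx n p q m s) (Idx n p q m s) ℝ :=
  Matrix.of fun i j => match i, j with
  | Sum.inr (Sum.inr (Sum.inr (Sum.inl i))),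
    Sum.inr (Sum.inr (Sum.inr (Sum.inl j))) => -W i j
  | Sum.inr (Sum.inr (Sum.inr (Sum.inr (Sum.inr _)))),
    Sum.inr (Sum.inr (Sum.inr (Sum.inr (Sum.inr _)))) => 1
  | _, _ => 0

/-- S_r = diag(0, 0, 0, 0, −Π, 1). -/
def Sr (W : Matrix (Fin s) (Fin s) ℝ) : Matrix (Idx n p q m s) (Idx n p q m s) ℝ :=
  Matrix.of fun i j => match i, j with
  | Sum.inr (Sum.inr (Sum.inr (Sum.inr (Sum.inl i)))),
    Sum.inr (Sum.inr (Sum.inr (Sum.inr (Sum.inl j)))) => -W i j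
  | Sum.inr (Sum.inr (Sum.inr (Sum.inr (Sum.inr _)))),
    Sum.inr (Sum.inr (Sum.inr (Sum.inr (Sum.inr _)))) => 1
  | _, _ => 0

end

/-! With `P = Y⁻¹`, take the Lyapunov function `V = ζᵀ P ζ`. Evaluating the LMI at the vector
`(P ζ, ω, v, ē, r, 1)` amounts to the congruence that turns `𝓜̃` into `V'`, and discarding the
nonnegative multiples of the slacks `1 - ωᵀ W_ω ω`, … leaves `V' ≤ -α (V - 1)` (the S-procedure).
By Grönwall's inequality `V - 1` is then at most a decaying exponential multiple of its initial
value. -/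

section Decay

variable {V V' : ℝ → ℝ} {a b c α : ℝ}

lemma sub_le_sub_mul_exp_of_deriv_right_le (hab : a ≤ b) (hV : ContinuousOn V (Set.Icc a b))
    (hV' : ∀ t ∈ Set.Ico a b, HasDerivWithinAt V (V' t) (Set.Ici t) t)
    (bound : ∀ t ∈ Set.Ico a b, V' t ≤ -α * (V t - c)) :
    V b - c ≤ (V a - c) * Real.exp (-α * (b - a)) := by
  have gronwall := le_gronwallBound_of_liminf_deriv_right_le (f := fun t => V t - c) (ε := 0)
    (hV.sub continuousOn_const)
    (fun t ht _ => ((hV' t ht).sub_const c).liminf_right_slope_le) le_rfl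
    (fun t ht => (bound t ht).trans_eq (add_zero _).symm) b (Set.right_mem_Icc.2 hab)
  rwa [gronwallBound_ε0] at gronwall

lemma le_max_of_deriv_right_le (hα : 0 ≤ α) (hab : a ≤ b) (hV : ContinuousOn V (Set.Icc a b))
    (hV' : ∀ t ∈ Set.Ico a b, HasDerivWithinAt V (V' t) (Set.Ici t) t)
    (bound : ∀ t ∈ Set.Ico a b, V' t ≤ -α * (V t - c)) :
    V b ≤ max (V a) c := by
  have decay := sub_le_sub_mul_exp_of_deriv_right_le hab hV hV' bound
  rcases le_total (V a) c with hac | hca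
  · have : (V a - c) * Real.exp (-α * (b - a)) ≤ 0 :=
      mul_nonpos_of_nonpos_of_nonneg (sub_nonpos.2 hac) (Real.exp_nonneg _)
    exact le_max_of_le_right (by linarith)
  · have exp_le_one : Real.exp (-α * (b - a)) ≤ 1 :=
      Real.exp_le_one_iff.2
        (mul_nonpos_of_nonpos_of_nonneg (neg_nonpos.2 hα) (sub_nonneg.2 hab))
    have : (V a - c) * Real.exp (-α * (b - a)) ≤ V a - c :=
      mul_le_of_le_one_right (sub_nonneg.2 hca) exp_le_one
    exact le_max_of_le_left (by linarith)

end Decay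

section QuadraticForm

variable {𝕜 ι κ : Type*} [NontriviallyNormedField 𝕜] [Fintype ι] {S : Set 𝕜} {t : 𝕜}

lemma hasDerivWithinAt_dotProduct {x y : 𝕜 → ι → 𝕜} {x' y' : ι → 𝕜}
    (hx : HasDerivWithinAt x x' S t) (hy : HasDerivWithinAt y y' S t) :
    HasDerivWithinAt (fun τ => x τ ⬝ᵥ y τ) (x' ⬝ᵥ y t + x t ⬝ᵥ y') S t := by
  simp only [dotProduct, ← Finset.sum_add_distrib]
  exact HasDerivWithinAt.fun_sum fun i _ =>
    (hasDerivWithinAt_pi.1 hx i).mul (hasDerivWithinAt_pi.1 hy i)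

lemma hasDerivWithinAt_mulVec (M : Matrix κ ι 𝕜) {x : 𝕜 → ι → 𝕜} {x' : ι → 𝕜}
    (hx : HasDerivWithinAt x x' S t) :
    HasDerivWithinAt (fun τ => M *ᵥ x τ) (M *ᵥ x') S t :=
  hasDerivWithinAt_pi.2 fun k =>
    HasDerivWithinAt.fun_sum fun i _ => (hasDerivWithinAt_pi.1 hx i).const_mul (M k i)

lemma hasDerivWithinAt_dotProduct_mulVec_self {P : Matrix ι ι 𝕜} (hP : P.IsSymm)
    {x : 𝕜 → ι → 𝕜} {x' : ι → 𝕜} (hx : HasDerivWithinAt x x' S t) :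
    HasDerivWithinAt (fun τ => x τ ⬝ᵥ P *ᵥ x τ) (2 * (P *ᵥ x t ⬝ᵥ x')) S t := by
  have symm : x t ⬝ᵥ P *ᵥ x' = P *ᵥ x t ⬝ᵥ x' := by
    rw [dotProduct_mulVec, ← mulVec_transpose, hP.eq]
  refine (hasDerivWithinAt_dotProduct hx (hasDerivWithinAt_mulVec P hx)).congr_deriv ?_
  rw [symm, dotProduct_comm x', two_mul]

end QuadraticForm

section LMI

variable {n p q m s : ℕ} (z : Fin n → ℝ) (w : Fin p → ℝ) (v : Fin q → ℝ) (e : Fin m → ℝ)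
  (r : Fin s → ℝ)

lemma stack_dotProduct_bigN_mulVec_stack (Y : Matrix (Fin n) (Fin n) ℝ) :
    stack z w v e r ⬝ᵥ bigN Y *ᵥ stack z w v e r = z ⬝ᵥ Y *ᵥ z - 1 := by
  simp [dotProduct, mulVec, stack, bigN, sub_eq_add_neg]

lemma stack_dotProduct_Sw_mulVec_stack (W : Matrix (Fin p) (Fin p) ℝ) :
    stack z w v e r ⬝ᵥ Sw W *ᵥ stack z w v e r = 1 - w ⬝ᵥ W *ᵥ w := by
  simp [dotProduct, mulVec, stack, Sw, sub_eq_neg_add]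

lemma stack_dotProduct_Sv_mulVec_stack (W : Matrix (Fin q) (Fin q) ℝ) :
    stack z w v e r ⬝ᵥ Sv W *ᵥ stack z w v e r = 1 - v ⬝ᵥ W *ᵥ v := by
  simp [dotProduct, mulVec, stack, Sv, sub_eq_neg_add]

lemma stack_dotProduct_Se_mulVec_stack (W : Matrix (Fin m) (Fin m) ℝ) :
    stack z w v e r ⬝ᵥ Se W *ᵥ stack z w v e r = 1 - e ⬝ᵥ W *ᵥ e := by
  simp [dotProduct, mulVec, stack, Se, sub_eq_neg_add]

lemma stack_dotProduct_Sr_mulVec_stack (W : Matrix (Fin s) (Fin s) ℝ) :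
    stack z w v e r ⬝ᵥ Sr W *ᵥ stack z w v e r = 1 - r ⬝ᵥ W *ᵥ r := by
  simp [dotProduct, mulVec, stack, Sr, sub_eq_neg_add]

lemma bigMt_mulVec_stack (Y A : Matrix (Fin n) (Fin n) ℝ) (G : Matrix (Fin n) (Fin p) ℝ)
    (Bv : Matrix (Fin n) (Fin q) ℝ) (Be : Matrix (Fin n) (Fin m) ℝ)
    (Br : Matrix (Fin n) (Fin s) ℝ) :
    bigMt Y A G Bv Be Br *ᵥ stack z w v e r =
      Sum.elim ((Y * Aᵀ + A * Y) *ᵥ z + G *ᵥ w + Bv *ᵥ v + Be *ᵥ e + Br *ᵥ r)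
        (Sum.elim (Gᵀ *ᵥ z) (Sum.elim (Bvᵀ *ᵥ z) (Sum.elim (Beᵀ *ᵥ z)
          (Sum.elim (Brᵀ *ᵥ z) 0)))) := by
  ext (i | i | i | i | i | i) <;> simp [dotProduct, mulVec, stack, bigMt, add_assoc]

lemma stack_dotProduct_bigMt_mulVec_stack {Y : Matrix (Fin n) (Fin n) ℝ} (hY : Y.IsSymm)
    (A : Matrix (Fin n) (Fin n) ℝ) (G : Matrix (Fin n) (Fin p) ℝ)
    (Bv : Matrix (Fin n) (Fin q) ℝ) (Be : Matrix (Fin n) (Fin m) ℝ)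
    (Br : Matrix (Fin n) (Fin s) ℝ) :
    stack z w v e r ⬝ᵥ bigMt Y A G Bv Be Br *ᵥ stack z w v e r =
      2 * (z ⬝ᵥ (A *ᵥ Y *ᵥ z + G *ᵥ w + Bv *ᵥ v + Be *ᵥ e + Br *ᵥ r)) := by
  have symm : z ⬝ᵥ (Y * Aᵀ) *ᵥ z = z ⬝ᵥ (A * Y) *ᵥ z := by
    rw [← dotProduct_transpose_mulVec (A * Y), transpose_mul, hY.eq]
  rw [bigMt_mulVec_stack]
  simp only [stack, sumElim_dotProduct_sumElim, dotProduct_transpose_mulVec, add_mulVec,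
    dotProduct_add, dotProduct_zero, symm, mulVec_mulVec]
  ring

variable {z w v e r}

lemma dissipation_inequality_of_lmi {A : Matrix (Fin n) (Fin n) ℝ}
    {G : Matrix (Fin n) (Fin p) ℝ} {Bv : Matrix (Fin n) (Fin q) ℝ}
    {Be : Matrix (Fin n) (Fin m) ℝ} {Br : Matrix (Fin n) (Fin s) ℝ}
    {Wω : Matrix (Fin p) (Fin p) ℝ} {Wv : Matrix (Fin q) (Fin q) ℝ}
    {Pe : Matrix (Fin m) (Fin m) ℝ} {Pim : Matrix (Fin s) (Fin s) ℝ}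
    {Y : Matrix (Fin n) (Fin n) ℝ} (hY : Y.IsSymm)
    {α βω βv βe βr : ℝ} (hβω : 0 ≤ βω) (hβv : 0 ≤ βv) (hβe : 0 ≤ βe) (hβr : 0 ≤ βr)
    (hLMI : (-(bigMt Y A G Bv Be Br) - α • bigN Y - βω • Sw Wω - βv • Sv Wv
              - βe • Se Pe - βr • Sr Pim).PosSemidef)
    (hw : w ⬝ᵥ Wω *ᵥ w ≤ 1) (hv : v ⬝ᵥ Wv *ᵥ v ≤ 1)
    (he : e ⬝ᵥ Pe *ᵥ e ≤ 1) (hr : r ⬝ᵥ Pim *ᵥ r ≤ 1) :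
    2 * (z ⬝ᵥ (A *ᵥ Y *ᵥ z + G *ᵥ w + Bv *ᵥ v + Be *ᵥ e + Br *ᵥ r)) ≤
      -α * (z ⬝ᵥ Y *ᵥ z - 1) := by
  have lmi := hLMI.dotProduct_mulVec_nonneg (stack z w v e r)
  simp only [star_trivial, sub_mulVec, neg_mulVec, smul_mulVec, dotProduct_sub, dotProduct_neg,
    dotProduct_smul, smul_eq_mul, stack_dotProduct_bigMt_mulVec_stack _ _ _ _ _ hY,
    stack_dotProduct_bigN_mulVec_stack, stack_dotProduct_Sw_mulVec_stack,
    stack_dotProduct_Sv_mulVec_stack, stack_dotProduct_Se_mulVec_stack,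
    stack_dotProduct_Sr_mulVec_stack] at lmi
  linarith [mul_nonneg hβω (sub_nonneg.2 hw), mul_nonneg hβv (sub_nonneg.2 hv),
    mul_nonneg hβe (sub_nonneg.2 he), mul_nonneg hβr (sub_nonneg.2 hr)]

end LMI

theorem stmt9_general {n p q m s : ℕ}
    (A : Matrix (Fin n) (Fin n) ℝ)
    (G : Matrix (Fin n) (Fin p) ℝ) (Bv : Matrix (Fin n) (Fin q) ℝ)
    (Be : Matrix (Fin n) (Fin m) ℝ) (Br : Matrix (Fin n) (Fin s) ℝ)
    (Wω : Matrix (Fin p) (Fin p) ℝ) (Wv : Matrix (Fin q) (Fin q) ℝ)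
    (Pe : Matrix (Fin m) (Fin m) ℝ) (Pim : Matrix (Fin s) (Fin s) ℝ)
    (Y : Matrix (Fin n) (Fin n) ℝ) (hY : Y.IsSymm) (hYdet : IsUnit Y.det)
    (α βω βv βe βr : ℝ) (hα : 0 ≤ α) (hβω : 0 ≤ βω) (hβv : 0 ≤ βv)
    (hβe : 0 ≤ βe) (hβr : 0 ≤ βr)
    (hLMI : (-(bigMt Y A G Bv Be Br) - α • bigN Y - βω • Sw Wω - βv • Sv Wv
              - βe • Se Pe - βr • Sr Pim).PosSemidef)
    (ζ : ℝ → Fin n → ℝ) (ω : ℝ → Fin p → ℝ) (v : ℝ → Fin q → ℝ)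
    (e : ℝ → Fin m → ℝ) (r : ℝ → Fin s → ℝ) (t₀ : ℝ)
    (hdyn : ∀ t ∈ Set.Ici t₀, HasDerivWithinAt ζ
      (A *ᵥ ζ t + G *ᵥ ω t + Bv *ᵥ v t + Be *ᵥ e t + Br *ᵥ r t) (Set.Ici t₀) t)
    (hω : ∀ t ∈ Set.Ici t₀, ω t ⬝ᵥ Wω *ᵥ ω t ≤ 1)
    (hv : ∀ t ∈ Set.Ici t₀, v t ⬝ᵥ Wv *ᵥ v t ≤ 1)
    (he : ∀ t ∈ Set.Ici t₀, e t ⬝ᵥ Pe *ᵥ e t ≤ 1)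
    (hr : ∀ t ∈ Set.Ici t₀, r t ⬝ᵥ Pim *ᵥ r t ≤ 1) :
    ∀ t ∈ Set.Ici t₀, ζ t ⬝ᵥ Y⁻¹ *ᵥ ζ t ≤ max (ζ t₀ ⬝ᵥ Y⁻¹ *ᵥ ζ t₀) 1 := by
  intro t ht
  have hP : Y⁻¹.IsSymm := by rw [IsSymm, transpose_nonsing_inv, hY.eq]
  have V_deriv := fun τ hτ => hasDerivWithinAt_dotProduct_mulVec_self hP (hdyn τ hτ)
  refine le_max_of_deriv_right_le hα ht
    (fun τ hτ => (V_deriv τ hτ.1).continuousWithinAt.mono Set.Icc_subset_Ici_self)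
    (fun τ hτ => (V_deriv τ hτ.1).mono (Set.Ici_subset_Ici.2 hτ.1)) fun τ hτ => ?_
  have dissipation := dissipation_inequality_of_lmi (z := Y⁻¹ *ᵥ ζ τ) hY hβω hβv hβe hβr hLMI
    (hω τ hτ.1) (hv τ hτ.1) (he τ hτ.1) (hr τ hτ.1)
  have Y_mulVec_z : Y *ᵥ Y⁻¹ *ᵥ ζ τ = ζ τ := by
    rw [mulVec_mulVec, mul_nonsing_inv _ hYdet, one_mulVec]
  rwa [Y_mulVec_z, dotProduct_comm _ (ζ τ)] at dissipation

/-- **boundedness of admissible trajectories.** If Y ≻ 0 and the linearized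
LMI is feasible, then with P = Y⁻¹ every admissible trajectory of the closed-loop system
satisfies ζ(t)ᵀ P ζ(t) ≤ max{ζ(0)ᵀ P ζ(0), 1} for all t ≥ 0. -/
theorem stmt9 {n p q m s : ℕ}
    (A : Matrix (Fin n) (Fin n) ℝ)
    (G : Matrix (Fin n) (Fin p) ℝ) (Bv : Matrix (Fin n) (Fin q) ℝ)
    (Be : Matrix (Fin n) (Fin m) ℝ) (Br : Matrix (Fin n) (Fin s) ℝ)
    (Wω : Matrix (Fin p) (Fin p) ℝ) (hWω : Wω.PosDef)
    (Wv : Matrix (Fin q) (Fin q) ℝ) (hWv : Wv.PosDef)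
    (Pe : Matrix (Fin m) (Fin m) ℝ) (hPe : Pe.PosDef)
    (Pim : Matrix (Fin s) (Fin s) ℝ) (hPim : Pim.PosDef)
    (Y : Matrix (Fin n) (Fin n) ℝ) (hY : Y.PosDef)
    (α βω βv βe βr : ℝ) (hα : 0 ≤ α) (hβω : 0 ≤ βω) (hβv : 0 ≤ βv)
    (hβe : 0 ≤ βe) (hβr : 0 ≤ βr)
    (hLMI : (-(bigMt Y A G Bv Be Br) - α • bigN Y - βω • Sw Wω - βv • Sv Wv
              - βe • Se Pe - βr • Sr Pim).PosSemidef)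
    (ζ : ℝ → Fin n → ℝ) (ω : ℝ → Fin p → ℝ) (v : ℝ → Fin q → ℝ)
    (e : ℝ → Fin m → ℝ) (r : ℝ → Fin s → ℝ)
    (hdyn : ∀ t ∈ Set.Ici (0:ℝ), HasDerivAt ζ
      (A *ᵥ ζ t + G *ᵥ ω t + Bv *ᵥ v t + Be *ᵥ e t + Br *ᵥ r t) t)
    (hω : ∀ t ∈ Set.Ici (0:ℝ), ω t ⬝ᵥ Wω *ᵥ ω t ≤ 1)
    (hv : ∀ t ∈ Set.Ici (0:ℝ), v t ⬝ᵥ Wv *ᵥ v t ≤ 1)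
    (he : ∀ t ∈ Set.Ici (0:ℝ), e t ⬝ᵥ Pe *ᵥ e t ≤ 1)
    (hr : ∀ t ∈ Set.Ici (0:ℝ), r t ⬝ᵥ Pim *ᵥ r t ≤ 1) :
    ∀ t ∈ Set.Ici (0:ℝ), ζ t ⬝ᵥ Y⁻¹ *ᵥ ζ t ≤ max (ζ 0 ⬝ᵥ Y⁻¹ *ᵥ ζ 0) 1 := by
  exact stmt9_general A G Bv Be Br Wω Wv Pe Pim Y (isHermitian_iff_isSymm.1 hY.isHermitian)
    hY.det_pos.ne'.isUnit α βω βv βe βr hα hβω hβv hβe hβr hLMI ζ ω v e r 0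
    (fun t ht => (hdyn t ht).hasDerivWithinAt) hω hv he hr
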